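/- (Thresholding estimator, multivariate.) Suppose Assumption 1 holds, the weights satisfy (W1) and (W2), m = m_n → ∞ with (m*)³/n_* → 0, and Assumption 2 holds: g : ℝ × [0,∞) → [0,1] is measurable with E[g(γ̂_n(j)_{νμ}, c_n(j))] → 1 as n → ∞ for each j ∈ ℤ^q and each entry 1 ≤ ν, μ ≤ p. Extend g to p×p matrices entrywise, g(A,c) = (g(a_{νμ},c))_{νμ}. Then the matrix-valued thresholding estimator σ̂²_{n,th} = ∑_{|j|≤m} w_m(j) γ̂_n(j) ∘ g(γ̂_n(j), c_n(j)), where ∘ is the Hadamard (entrywise) product, is weakly consistent: ‖σ̂²_{n,th} − σ²‖_∞ → 0 in probability as n → ∞. -/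

import Mathlib

/-!
The proof is a mean-square estimate for the sample autocovariances, followed by Markov's inequality.

*Covariances.* If `X`, `Y` are measurable with respect to two σ-algebras with φ-mixing coefficient
`φ`, then `|Cov(X, Y)| ≤ 2 φ^{1/2} ‖X‖₂ ‖Y‖₂` (`cov_le`). By stationarity this applies to products
`ξ_i ξ_{i+j}` and `ξ_{i'} ξ_{i'+j}`, whose sites are separated by at least `|i' - i| - |j|` along
some axis (`cov_shift_le`). With at most `2q (2l + 1)^{q-1}` lattice points of sup norm `l`, the
condition `∑ r^{q-1} φ(r)^{1/2} < ∞` gives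
`∑_h φ(|h| - |j|)^{1/2} ≤ K (|j| + 1)^q` (`sum_radial_le`). Hence
`E (γ̂_n(j) - γ(j))² ≤ C (|j| + 1)^q / |Γ̃_n(j)|` (`acovHat_mse_le`), and the autocovariances are
absolutely summable (`summable_abs_acov`).

*Error splitting.* Entrywise, the error of the estimator is bounded by the sum of three terms
(`abs_window_sub_tsum_le`): the stochastic error `C_w ∑_{|j| ≤ m} |γ̂_n(j) - γ(j)|`, the term
`∑_{|j| ≤ m} |γ(j)| (|w_m(j) - 1| + 1 - g(γ̂_n(j), c_n(j)))`, and the tail `∑_{|j| > m} |γ(j)|`.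
The expectation of the first is at most `(2m* + 1)^q` times the root mean square error, hence
`O(((m*)³ / n_*)^{q/2})` (`tendsto_sum_integral_abs_sub`); the expectations of the other two vanish
by dominated convergence.
-/

open MeasureTheory Filter Finset Topology

noncomputable section

variable {Ω : Type*}

/-- σ-algebra generated by the field at sites whose `j`-th coordinate is `≤ r`. -/
def sigmaLE {d : ℕ} {E : Type*} [MeasurableSpace Ω] [MeasurableSpace E]
    (ξ : (Fin d → ℤ) → Ω → E) (j : Fin d) (r : ℤ) : MeasurableSpace Ω :=
  ⨆ i ∈ {i : Fin d → ℤ | i j ≤ r}, MeasurableSpace.comap (ξ i) inferInstance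

/-- σ-algebra generated by the field at sites whose `j`-th coordinate is `≥ r`. -/
def sigmaGE {d : ℕ} {E : Type*} [MeasurableSpace Ω] [MeasurableSpace E]
    (ξ : (Fin d → ℤ) → Ω → E) (j : Fin d) (r : ℤ) : MeasurableSpace Ω :=
  ⨆ i ∈ {i : Fin d → ℤ | r ≤ i j}, MeasurableSpace.comap (ξ i) inferInstance

/-- φ-mixing coefficient in direction `j` at distance `r`. -/
def phiCoeff [MeasurableSpace Ω] {d : ℕ} {E : Type*} [MeasurableSpace E]
    (ξ : (Fin d → ℤ) → Ω → E) (P : Measure Ω) (j : Fin d) (r : ℤ) : ℝ :=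
  sSup {x | ∃ A B : Set Ω, MeasurableSet[sigmaLE ξ j 0] A ∧ MeasurableSet[sigmaGE ξ j r] B ∧
    P A ≠ 0 ∧ x = |(P (A ∩ B)).toReal / (P A).toReal - (P B).toReal|}

/-- The (half-space) φ-mixing coefficient `φ(r)`, with the convention `φ(r) = 1` for `r ≤ 0`. -/
def phiMix [MeasurableSpace Ω] {d : ℕ} {E : Type*} [MeasurableSpace E]
    (ξ : (Fin d → ℤ) → Ω → E) (P : Measure Ω) (r : ℤ) : ℝ :=
  if r ≤ 0 then 1 else ⨆ j : Fin d, phiCoeff ξ P j r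

/-- Strict stationarity: all finite dimensional distributions are shift invariant. -/
def StrictStationary [MeasurableSpace Ω] {d : ℕ} {E : Type*} [MeasurableSpace E]
    (ξ : (Fin d → ℤ) → Ω → E) (P : Measure Ω) : Prop :=
  ∀ t : Fin d → ℤ,
    Measure.map (fun ω => (fun i => ξ (i + t) ω)) P = Measure.map (fun ω => (fun i => ξ i ω)) P

/-- The index box `Γ_n = {1,…,n₁} × ⋯ × {1,…,n_d}`. -/
def box (d : ℕ) (n : Fin d → ℕ) : Finset (Fin d → ℤ) :=
  Finset.Icc 1 (fun i => (n i : ℤ))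

/-- `Γ̃_n(j) = {i ∈ Γ_n : i + j ∈ Γ_n}`. -/
def boxJ (d : ℕ) (n : Fin d → ℕ) (j : Fin d → ℤ) : Finset (Fin d → ℤ) :=
  (box d n).filter (fun i => i + j ∈ box d n)

/-- The lag window `{j : |j_i| ≤ m_i ∀ i}`. -/
def lags (d : ℕ) (m : Fin d → ℕ) : Finset (Fin d → ℤ) :=
  Finset.Icc (fun i => -(m i : ℤ)) (fun i => (m i : ℤ))

/-- Autocovariance matrix `γ(j) = E(ξ_0 ξ_jᵀ)`. -/
def acov [MeasurableSpace Ω] {d p : ℕ} (ξ : (Fin d → ℤ) → Ω → (Fin p → ℝ)) (P : Measure Ω)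
    (j : Fin d → ℤ) : Fin p → Fin p → ℝ :=
  fun ν μ => ∫ ω, ξ 0 ω ν * ξ j ω μ ∂P

/-- Sample autocovariance `γ̂_n(j)`. -/
def acovHat {d p : ℕ} (ξ : (Fin d → ℤ) → Ω → (Fin p → ℝ)) (n : Fin d → ℕ) (j : Fin d → ℤ)
    (ω : Ω) : Fin p → Fin p → ℝ :=
  fun ν μ => ((boxJ d n j).card : ℝ)⁻¹ * ∑ i ∈ boxJ d n j, ξ i ω ν * ξ (i + j) ω μ

/-- The estimator `σ̂²_n = ∑_{|j| ≤ m} w_m(j) γ̂_n(j)`. -/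
def sigmaHat {d p : ℕ} (ξ : (Fin d → ℤ) → Ω → (Fin p → ℝ))
    (w : (Fin d → ℕ) → (Fin d → ℤ) → ℝ) (m n : Fin d → ℕ) (ω : Ω) : Fin p → Fin p → ℝ :=
  ∑ j ∈ lags d m, w m j • acovHat ξ n j ω

open ProbabilityTheory

/-! ### Covariance inequality for φ-mixing σ-algebras -/

lemma sum_measureReal_inter_preimage [MeasurableSpace Ω] (P : Measure Ω) [IsProbabilityMeasure P]
    (Y : Ω → ℝ) (hY : ∀ y, MeasurableSet (Y ⁻¹' {y})) (A : Set Ω) (hA : MeasurableSet A)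
    (T : Finset ℝ) :
    ∑ y ∈ T, P.real (A ∩ Y ⁻¹' {y}) = P.real (A ∩ Y ⁻¹' T) := by
  rw [← measureReal_biUnion_finset]
  · congr 1
    ext ω
    simp
  · intro x _ y _ hxy
    refine Set.disjoint_left.2 fun ω h1 h2 => hxy ?_
    simp only [Set.mem_inter_iff, Set.mem_preimage, Set.mem_singleton_iff] at h1 h2
    rw [← h1.2, ← h2.2]
  · exact fun y _ => hA.inter (hY y)

lemma integral_comp_finite_range [MeasurableSpace Ω] (P : Measure Ω) [IsProbabilityMeasure P]
    (X Y : Ω → ℝ) (hX : ∀ x, MeasurableSet (X ⁻¹' {x})) (hY : ∀ y, MeasurableSet (Y ⁻¹' {y}))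
    (S T : Finset ℝ) (hS : ∀ ω, X ω ∈ S) (hT : ∀ ω, Y ω ∈ T) (F : ℝ → ℝ → ℝ) :
    ∫ ω, F (X ω) (Y ω) ∂P = ∑ x ∈ S, ∑ y ∈ T, F x y * P.real (X ⁻¹' {x} ∩ Y ⁻¹' {y}) := by
  have hF : ∀ ω, F (X ω) (Y ω)
      = ∑ x ∈ S, ∑ y ∈ T, F x y * (X ⁻¹' {x} ∩ Y ⁻¹' {y}).indicator (1 : Ω → ℝ) ω := by
    intro ω
    rw [Finset.sum_eq_single_of_mem (X ω) (hS ω), Finset.sum_eq_single_of_mem (Y ω) (hT ω)]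
    · simp
    · intro y _ hy
      rw [Set.indicator_of_notMem, mul_zero]
      simp only [Set.mem_inter_iff, Set.mem_preimage, Set.mem_singleton_iff]
      exact fun h => hy h.2.symm
    · intro x _ hx
      refine Finset.sum_eq_zero fun y _ => ?_
      rw [Set.indicator_of_notMem, mul_zero]
      simp only [Set.mem_inter_iff, Set.mem_preimage, Set.mem_singleton_iff]
      exact fun h => hx h.1.symm
  have hint : ∀ x y, Integrable
      (fun ω => F x y * (X ⁻¹' {x} ∩ Y ⁻¹' {y}).indicator (1 : Ω → ℝ) ω) P := fun x y =>
    ((integrable_const (1 : ℝ)).indicator ((hX x).inter (hY y))).const_mul _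
  simp_rw [hF]
  rw [integral_finsetSum _ fun x _ => integrable_finsetSum _ fun y _ => hint x y]
  refine Finset.sum_congr rfl fun x _ => ?_
  rw [integral_finsetSum _ fun y _ => hint x y]
  refine Finset.sum_congr rfl fun y _ => ?_
  rw [integral_const_mul, integral_indicator_one ((hX x).inter (hY y))]

/-- Covariance inequality for φ-mixing σ-algebras, functions with finitely many values. With
`e x y = P(X = x, Y = y) - P(X = x) P(Y = y)`, the marginal sums of `|e|` are at most
`2φ P(X = x)` and `2 P(Y = y)`, and Cauchy–Schwarz with weights `|e|` gives the bound. -/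
lemma cov_le_simple {m₁ m₂ mΩ : MeasurableSpace Ω} (P : Measure Ω) [IsProbabilityMeasure P]
    (h₁ : m₁ ≤ mΩ) (h₂ : m₂ ≤ mΩ) {φ : ℝ} (hφ0 : 0 ≤ φ)
    (hφ : ∀ A B, MeasurableSet[m₁] A → MeasurableSet[m₂] B →
      |P.real (A ∩ B) - P.real A * P.real B| ≤ φ * P.real A)
    (X Y : Ω → ℝ) (hXm : Measurable[m₁] X) (hYm : Measurable[m₂] Y)
    (S T : Finset ℝ) (hS : ∀ ω, X ω ∈ S) (hT : ∀ ω, Y ω ∈ T) :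
    |∫ ω, X ω * Y ω ∂P - (∫ ω, X ω ∂P) * ∫ ω, Y ω ∂P| ≤
      2 * √φ * √(∫ ω, X ω ^ 2 ∂P) * √(∫ ω, Y ω ^ 2 ∂P) := by
  classical
  have hX1 : ∀ x, MeasurableSet[m₁] (X ⁻¹' {x}) := fun x => hXm (measurableSet_singleton x)
  have hY2 : ∀ y, MeasurableSet[m₂] (Y ⁻¹' {y}) := fun y => hYm (measurableSet_singleton y)
  have hX : ∀ x, MeasurableSet (X ⁻¹' {x}) := fun x => h₁ _ (hX1 x)
  have hY : ∀ y, MeasurableSet (Y ⁻¹' {y}) := fun y => h₂ _ (hY2 y)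
  have key := integral_comp_finite_range P X Y hX hY S T hS hT
  set p : ℝ → ℝ → ℝ := fun x y => P.real (X ⁻¹' {x} ∩ Y ⁻¹' {y}) with hp
  set pX : ℝ → ℝ := fun x => P.real (X ⁻¹' {x}) with hpX
  set pY : ℝ → ℝ := fun y => P.real (Y ⁻¹' {y}) with hpY
  have hXT : ∀ x, ∀ T' : Finset ℝ, ∑ y ∈ T', p x y = P.real (X ⁻¹' {x} ∩ Y ⁻¹' T') := fun x T' =>
    sum_measureReal_inter_preimage P Y hY _ (hX x) T'
  have hYT : ∀ T' : Finset ℝ, ∑ y ∈ T', pY y = P.real (Y ⁻¹' T') := fun T' => by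
    simpa using sum_measureReal_inter_preimage P Y hY Set.univ MeasurableSet.univ T'
  have hsumX : ∀ x, ∑ y ∈ T, p x y = pX x := fun x => by
    rw [hXT, hpX]
    congr 1
    ext ω
    simp [hT ω]
  have hsumY : ∀ y, ∑ x ∈ S, p x y = pY y := fun y => by
    have := sum_measureReal_inter_preimage P X hX (Y ⁻¹' {y}) (hY y) S
    simp only [hp, hpY]
    simp_rw [Set.inter_comm (X ⁻¹' _)]
    rw [this]
    congr 1
    ext ω
    simp [hS ω]
  have hsumpX : ∑ x ∈ S, pX x = 1 := by
    have := sum_measureReal_inter_preimage P X hX Set.univ MeasurableSet.univ S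
    simp only [Set.univ_inter] at this
    rw [hpX, this]
    have : X ⁻¹' (S : Set ℝ) = Set.univ := by
      ext ω
      simp [hS ω]
    rw [this]
    simp
  have hp0 : ∀ x y, 0 ≤ p x y := fun x y => measureReal_nonneg
  have hpX0 : ∀ x, 0 ≤ pX x := fun x => measureReal_nonneg
  have hpY0 : ∀ y, 0 ≤ pY y := fun y => measureReal_nonneg
  set e : ℝ → ℝ → ℝ := fun x y => p x y - pX x * pY y with he
  have hcov : ∫ ω, X ω * Y ω ∂P - (∫ ω, X ω ∂P) * ∫ ω, Y ω ∂P
      = ∑ x ∈ S, ∑ y ∈ T, x * y * e x y := by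
    have hEX : ∫ ω, X ω ∂P = ∑ x ∈ S, x * pX x := by
      rw [key fun x _ => x]
      refine Finset.sum_congr rfl fun x _ => ?_
      rw [← Finset.mul_sum]
      congr 1
      exact hsumX x
    have hEY : ∫ ω, Y ω ∂P = ∑ y ∈ T, y * pY y := by
      rw [key fun _ y => y, Finset.sum_comm]
      refine Finset.sum_congr rfl fun y _ => ?_
      rw [← Finset.mul_sum]
      congr 1
      exact hsumY y
    rw [key fun x y => x * y, hEX, hEY, Finset.sum_mul_sum, ← Finset.sum_sub_distrib]
    refine Finset.sum_congr rfl fun x _ => ?_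
    rw [← Finset.sum_sub_distrib]
    refine Finset.sum_congr rfl fun y _ => ?_
    simp only [he, hp]
    ring
  have hmargX : ∀ x, ∑ y ∈ T, |e x y| ≤ 2 * φ * pX x := by
    intro x
    have hb : ∀ T' : Finset ℝ, |∑ y ∈ T', e x y| ≤ φ * pX x := by
      intro T'
      have hm : MeasurableSet[m₂] (Y ⁻¹' (T' : Set ℝ)) := hYm T'.measurableSet
      have := hφ (X ⁻¹' {x}) (Y ⁻¹' T') (hX1 x) hm
      rw [← hXT, ← hYT] at this
      simpa [he, Finset.sum_sub_distrib, Finset.mul_sum] using this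
    rw [← Finset.sum_filter_add_sum_filter_not T (fun y => 0 ≤ e x y)]
    have e1 : ∑ y ∈ T with 0 ≤ e x y, |e x y| = ∑ y ∈ T with 0 ≤ e x y, e x y :=
      Finset.sum_congr rfl fun y hy => abs_of_nonneg (Finset.mem_filter.1 hy).2
    have e2 : ∑ y ∈ T with ¬ 0 ≤ e x y, |e x y| = - ∑ y ∈ T with ¬ 0 ≤ e x y, e x y := by
      rw [← Finset.sum_neg_distrib]
      exact Finset.sum_congr rfl fun y hy =>
        abs_of_nonpos (not_le.1 (Finset.mem_filter.1 hy).2).le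
    rw [e1, e2]
    have b1 := (abs_le.1 (hb (T.filter fun y => 0 ≤ e x y))).2
    have b2 := (abs_le.1 (hb (T.filter fun y => ¬ 0 ≤ e x y))).1
    linarith
  have hmargY : ∀ y, ∑ x ∈ S, |e x y| ≤ 2 * pY y := by
    intro y
    calc ∑ x ∈ S, |e x y| ≤ ∑ x ∈ S, (p x y + pX x * pY y) := by
          refine Finset.sum_le_sum fun x _ => ?_
          have := mul_nonneg (hpX0 x) (hpY0 y)
          have := hp0 x y
          rw [abs_le]
          constructor <;> simp only [he] <;> linarith
      _ = 2 * pY y := by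
          rw [Finset.sum_add_distrib, hsumY, ← Finset.sum_mul, hsumpX]
          ring
  have hEX2 : ∫ ω, X ω ^ 2 ∂P = ∑ x ∈ S, x ^ 2 * pX x := by
    rw [key fun x _ => x ^ 2]
    refine Finset.sum_congr rfl fun x _ => ?_
    rw [← Finset.mul_sum]
    congr 1
    exact hsumX x
  have hEY2 : ∫ ω, Y ω ^ 2 ∂P = ∑ y ∈ T, y ^ 2 * pY y := by
    rw [key fun _ y => y ^ 2, Finset.sum_comm]
    refine Finset.sum_congr rfl fun y _ => ?_
    rw [← Finset.mul_sum]
    congr 1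
    exact hsumY y
  have hsqX : ∑ z ∈ S ×ˢ T, z.1 ^ 2 * |e z.1 z.2| ≤ 2 * φ * ∫ ω, X ω ^ 2 ∂P := by
    rw [Finset.sum_product, hEX2, Finset.mul_sum]
    refine Finset.sum_le_sum fun x _ => ?_
    simp only
    rw [← Finset.mul_sum]
    nlinarith [mul_le_mul_of_nonneg_left (hmargX x) (sq_nonneg x)]
  have hsqY : ∑ z ∈ S ×ˢ T, z.2 ^ 2 * |e z.1 z.2| ≤ 2 * ∫ ω, Y ω ^ 2 ∂P := by
    rw [Finset.sum_product_right, hEY2, Finset.mul_sum]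
    refine Finset.sum_le_sum fun y _ => ?_
    simp only
    rw [← Finset.mul_sum]
    nlinarith [mul_le_mul_of_nonneg_left (hmargY y) (sq_nonneg y)]
  rw [hcov]
  have hCS := Finset.sum_mul_sq_le_sq_mul_sq (S ×ˢ T) (fun z => |z.1| * √|e z.1 z.2|)
    (fun z => |z.2| * √|e z.1 z.2|)
  have hle : |∑ x ∈ S, ∑ y ∈ T, x * y * e x y| ≤
      ∑ z ∈ S ×ˢ T, |z.1| * √|e z.1 z.2| * (|z.2| * √|e z.1 z.2|) := by
    rw [← Finset.sum_product' S T (fun x y => x * y * e x y)]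
    refine (Finset.abs_sum_le_sum_abs _ _).trans (Finset.sum_le_sum fun z _ => le_of_eq ?_)
    rw [abs_mul, abs_mul]
    have := Real.mul_self_sqrt (abs_nonneg (e z.1 z.2))
    linear_combination -|z.1| * |z.2| * this
  simp only [mul_pow, sq_abs, Real.sq_sqrt (abs_nonneg _)] at hCS
  have hI1 : 0 ≤ ∫ ω, X ω ^ 2 ∂P := integral_nonneg fun ω => sq_nonneg _
  have hI2 : 0 ≤ ∫ ω, Y ω ^ 2 ∂P := integral_nonneg fun ω => sq_nonneg _
  refine hle.trans (le_of_sq_le_sq ?_ (by positivity))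
  refine hCS.trans ((mul_le_mul hsqX hsqY (Finset.sum_nonneg fun z _ => by positivity)
    (by positivity)).trans (le_of_eq ?_))
  simp only [mul_pow, Real.sq_sqrt hφ0, Real.sq_sqrt hI1, Real.sq_sqrt hI2]
  ring

/-- Ibragimov's covariance inequality: if `|P(A ∩ B) - P(A) P(B)| ≤ φ P(A)` for all `A ∈ m₁` and
`B ∈ m₂`, then `|Cov(X, Y)| ≤ 2 φ^{1/2} ‖X‖₂ ‖Y‖₂` for square integrable `m₁`-measurable `X` and
`m₂`-measurable `Y`. -/
lemma cov_le {m₁ m₂ mΩ : MeasurableSpace Ω} (P : Measure Ω) [IsProbabilityMeasure P]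
    (h₁ : m₁ ≤ mΩ) (h₂ : m₂ ≤ mΩ) {φ : ℝ} (hφ0 : 0 ≤ φ)
    (hφ : ∀ A B, MeasurableSet[m₁] A → MeasurableSet[m₂] B →
      |P.real (A ∩ B) - P.real A * P.real B| ≤ φ * P.real A)
    (X Y : Ω → ℝ) (hX : Measurable[m₁] X) (hY : Measurable[m₂] Y)
    (hX2 : Integrable (fun ω => X ω ^ 2) P) (hY2 : Integrable (fun ω => Y ω ^ 2) P) :
    |∫ ω, X ω * Y ω ∂P - (∫ ω, X ω ∂P) * ∫ ω, Y ω ∂P| ≤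
      2 * √φ * √(∫ ω, X ω ^ 2 ∂P) * √(∫ ω, Y ω ^ 2 ∂P) := by
  let Xn : ℕ → @SimpleFunc Ω m₁ ℝ := fun n =>
    @SimpleFunc.approxOn ℝ Ω _ _ _ m₁ X hX Set.univ 0 (Set.mem_univ _) _ n
  let Yn : ℕ → @SimpleFunc Ω m₂ ℝ := fun n =>
    @SimpleFunc.approxOn ℝ Ω _ _ _ m₂ Y hY Set.univ 0 (Set.mem_univ _) _ n
  have hXm : ∀ n, Measurable (Xn n) := fun n => (@SimpleFunc.measurable _ _ m₁ _ (Xn n)).mono h₁ le_rfl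
  have hYm : ∀ n, Measurable (Yn n) := fun n => (@SimpleFunc.measurable _ _ m₂ _ (Yn n)).mono h₂ le_rfl
  have hXt : ∀ ω, Tendsto (fun n => Xn n ω) atTop (𝓝 (X ω)) := fun ω =>
    @SimpleFunc.tendsto_approxOn ℝ Ω _ _ _ m₁ X hX Set.univ 0 (Set.mem_univ _) _ ω (by simp)
  have hYt : ∀ ω, Tendsto (fun n => Yn n ω) atTop (𝓝 (Y ω)) := fun ω =>
    @SimpleFunc.tendsto_approxOn ℝ Ω _ _ _ m₂ Y hY Set.univ 0 (Set.mem_univ _) _ ω (by simp)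
  have hXb : ∀ n ω, |Xn n ω| ≤ 2 * |X ω| := fun n ω => by
    have := @SimpleFunc.norm_approxOn_zero_le Ω ℝ m₁ _ _ _ X hX Set.univ (Set.mem_univ _) _ ω n
    rw [two_mul]
    exact this
  have hYb : ∀ n ω, |Yn n ω| ≤ 2 * |Y ω| := fun n ω => by
    have := @SimpleFunc.norm_approxOn_zero_le Ω ℝ m₂ _ _ _ Y hY Set.univ (Set.mem_univ _) _ ω n
    rw [two_mul]
    exact this
  have hsX : ∀ n ω, Xn n ω ^ 2 ≤ 4 * X ω ^ 2 := fun n ω => by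
    have := pow_le_pow_left₀ (abs_nonneg _) (hXb n ω) 2
    rw [mul_pow, sq_abs, sq_abs] at this
    linarith
  have hsY : ∀ n ω, Yn n ω ^ 2 ≤ 4 * Y ω ^ 2 := fun n ω => by
    have := pow_le_pow_left₀ (abs_nonneg _) (hYb n ω) 2
    rw [mul_pow, sq_abs, sq_abs] at this
    linarith
  have t1 : Tendsto (fun n => ∫ ω, Xn n ω * Yn n ω ∂P) atTop (𝓝 (∫ ω, X ω * Y ω ∂P)) := by
    refine tendsto_integral_of_dominated_convergence (fun ω => 4 * X ω ^ 2 + 4 * Y ω ^ 2)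
      (fun n => ((hXm n).mul (hYm n)).aestronglyMeasurable)
      ((hX2.const_mul 4).add (hY2.const_mul 4)) (fun n => Eventually.of_forall fun ω => ?_)
      (Eventually.of_forall fun ω => (hXt ω).mul (hYt ω))
    rw [Real.norm_eq_abs, abs_le]
    constructor <;>
    nlinarith [hsX n ω, hsY n ω, sq_nonneg (Xn n ω - Yn n ω), sq_nonneg (Xn n ω + Yn n ω),
      sq_nonneg (X ω), sq_nonneg (Y ω)]
  have t2 : Tendsto (fun n => ∫ ω, Xn n ω ∂P) atTop (𝓝 (∫ ω, X ω ∂P)) := by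
    refine tendsto_integral_of_dominated_convergence (fun ω => 1 + 4 * X ω ^ 2)
      (fun n => (hXm n).aestronglyMeasurable)
      ((integrable_const 1).add (hX2.const_mul 4)) (fun n => Eventually.of_forall fun ω => ?_)
      (Eventually.of_forall fun ω => hXt ω)
    rw [Real.norm_eq_abs, abs_le]
    constructor <;> nlinarith [hsX n ω, sq_nonneg (Xn n ω - 1), sq_nonneg (Xn n ω + 1)]
  have t3 : Tendsto (fun n => ∫ ω, Yn n ω ∂P) atTop (𝓝 (∫ ω, Y ω ∂P)) := by
    refine tendsto_integral_of_dominated_convergence (fun ω => 1 + 4 * Y ω ^ 2)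
      (fun n => (hYm n).aestronglyMeasurable)
      ((integrable_const 1).add (hY2.const_mul 4)) (fun n => Eventually.of_forall fun ω => ?_)
      (Eventually.of_forall fun ω => hYt ω)
    rw [Real.norm_eq_abs, abs_le]
    constructor <;> nlinarith [hsY n ω, sq_nonneg (Yn n ω - 1), sq_nonneg (Yn n ω + 1)]
  have t4 : Tendsto (fun n => ∫ ω, Xn n ω ^ 2 ∂P) atTop (𝓝 (∫ ω, X ω ^ 2 ∂P)) := by
    refine tendsto_integral_of_dominated_convergence (fun ω => 4 * X ω ^ 2)
      (fun n => ((hXm n).pow_const 2).aestronglyMeasurable)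
      (hX2.const_mul 4) (fun n => Eventually.of_forall fun ω => ?_)
      (Eventually.of_forall fun ω => (hXt ω).pow 2)
    rw [Real.norm_eq_abs, abs_of_nonneg (sq_nonneg _)]
    exact hsX n ω
  have t5 : Tendsto (fun n => ∫ ω, Yn n ω ^ 2 ∂P) atTop (𝓝 (∫ ω, Y ω ^ 2 ∂P)) := by
    refine tendsto_integral_of_dominated_convergence (fun ω => 4 * Y ω ^ 2)
      (fun n => ((hYm n).pow_const 2).aestronglyMeasurable)
      (hY2.const_mul 4) (fun n => Eventually.of_forall fun ω => ?_)
      (Eventually.of_forall fun ω => (hYt ω).pow 2)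
    rw [Real.norm_eq_abs, abs_of_nonneg (sq_nonneg _)]
    exact hsY n ω
  exact le_of_tendsto_of_tendsto' (t1.sub (t2.mul t3)).abs
    ((t4.sqrt.const_mul _).mul t5.sqrt) fun n =>
      cov_le_simple P h₁ h₂ hφ0 hφ (Xn n) (Yn n) (@SimpleFunc.measurable _ _ m₁ _ (Xn n))
        (@SimpleFunc.measurable _ _ m₂ _ (Yn n)) (@SimpleFunc.range _ _ m₁ (Xn n))
        (@SimpleFunc.range _ _ m₂ (Yn n)) (@SimpleFunc.mem_range_self _ _ m₁ (Xn n))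
        (@SimpleFunc.mem_range_self _ _ m₂ (Yn n))

/-! ### Mixing coefficients and covariances of the field -/

section Field

variable [mΩ : MeasurableSpace Ω] {q p : ℕ}

lemma sigmaLE_le {ξ : (Fin q → ℤ) → Ω → (Fin p → ℝ)} (hmeas : ∀ i, Measurable (ξ i))
    (k : Fin q) (r : ℤ) : sigmaLE ξ k r ≤ mΩ :=
  iSup₂_le fun i _ => (hmeas i).comap_le

lemma sigmaGE_le {ξ : (Fin q → ℤ) → Ω → (Fin p → ℝ)} (hmeas : ∀ i, Measurable (ξ i))
    (k : Fin q) (r : ℤ) : sigmaGE ξ k r ≤ mΩ :=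
  iSup₂_le fun i _ => (hmeas i).comap_le

lemma measurable_sigmaLE (ξ : (Fin q → ℤ) → Ω → (Fin p → ℝ)) {k : Fin q} {r : ℤ}
    {i : Fin q → ℤ} (hi : i k ≤ r) : Measurable[sigmaLE ξ k r] (ξ i) :=
  measurable_iff_comap_le.2 (le_iSup₂_of_le i hi le_rfl)

lemma measurable_sigmaGE (ξ : (Fin q → ℤ) → Ω → (Fin p → ℝ)) {k : Fin q} {r : ℤ}
    {i : Fin q → ℤ} (hi : r ≤ i k) : Measurable[sigmaGE ξ k r] (ξ i) :=
  measurable_iff_comap_le.2 (le_iSup₂_of_le i hi le_rfl)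

variable (P : Measure Ω) [IsProbabilityMeasure P]

lemma bddAbove_phiCoeff (ξ : (Fin q → ℤ) → Ω → (Fin p → ℝ)) (k : Fin q) (r : ℤ) :
    BddAbove {x | ∃ A B : Set Ω, MeasurableSet[sigmaLE ξ k 0] A ∧ MeasurableSet[sigmaGE ξ k r] B ∧
    P A ≠ 0 ∧ x = |(P (A ∩ B)).toReal / (P A).toReal - (P B).toReal|} := by
  refine ⟨1, ?_⟩
  rintro x ⟨A, B, _, _, hA, rfl⟩
  have h1 : P.real (A ∩ B) / P.real A ≤ 1 :=
    div_le_one_of_le₀ (measureReal_mono Set.inter_subset_left) measureReal_nonneg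
  have h2 : 0 ≤ P.real (A ∩ B) / P.real A := div_nonneg measureReal_nonneg measureReal_nonneg
  have h3 : P.real B ≤ 1 := measureReal_le_one
  have h4 : 0 ≤ P.real B := measureReal_nonneg
  change |P.real (A ∩ B) / P.real A - P.real B| ≤ 1
  rw [abs_le]
  constructor <;> linarith

omit [IsProbabilityMeasure P] in
lemma phiCoeff_nonneg (ξ : (Fin q → ℤ) → Ω → (Fin p → ℝ)) (k : Fin q) (r : ℤ) :
    0 ≤ phiCoeff ξ P k r := by
  apply Real.sSup_nonneg
  rintro x ⟨A, B, _, _, _, rfl⟩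
  exact abs_nonneg _

omit [IsProbabilityMeasure P] in
lemma phiMix_nonneg (ξ : (Fin q → ℤ) → Ω → (Fin p → ℝ)) (r : ℤ) : 0 ≤ phiMix ξ P r := by
  unfold phiMix
  split_ifs
  · exact zero_le_one
  · exact Real.iSup_nonneg fun k => phiCoeff_nonneg P ξ k r

lemma phiMix_event (ξ : (Fin q → ℤ) → Ω → (Fin p → ℝ)) (k : Fin q) {r : ℤ} (hr : 1 ≤ r)
    (A B : Set Ω) (hA : MeasurableSet[sigmaLE ξ k 0] A) (hB : MeasurableSet[sigmaGE ξ k r] B) :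
    |P.real (A ∩ B) - P.real A * P.real B| ≤ phiMix ξ P r * P.real A := by
  by_cases h0 : P A = 0
  · have h1 : P.real A = 0 := by simp [measureReal_def, h0]
    have h2 : P.real (A ∩ B) = 0 :=
      le_antisymm (h1 ▸ measureReal_mono Set.inter_subset_left) measureReal_nonneg
    simp [h1, h2]
  · have hpos : 0 < P.real A := by
      rw [measureReal_def]
      exact ENNReal.toReal_pos h0 (measure_ne_top _ _)
    have h1 : |P.real (A ∩ B) / P.real A - P.real B| ≤ phiMix ξ P r := by
      rw [phiMix, if_neg (by omega)]
      refine le_trans ?_ (le_ciSup (f := fun k => phiCoeff ξ P k r) (Set.finite_range _).bddAbove k)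
      exact le_csSup (bddAbove_phiCoeff P ξ k r) ⟨A, B, hA, hB, h0, rfl⟩
    calc |P.real (A ∩ B) - P.real A * P.real B|
        = |P.real (A ∩ B) / P.real A - P.real B| * P.real A := by
          rw [← abs_of_pos hpos, ← abs_mul, abs_of_pos hpos]
          congr 1
          field_simp
      _ ≤ _ := mul_le_mul_of_nonneg_right h1 hpos.le

variable {P} {ξ : (Fin q → ℤ) → Ω → (Fin p → ℝ)}

omit [IsProbabilityMeasure P] in
lemma StrictStationary.identDistrib (hstat : StrictStationary ξ P) (hmeas : ∀ i, Measurable (ξ i))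
    (t : Fin q → ℤ) {F : ((Fin q → ℤ) → Fin p → ℝ) → ℝ} (hF : Measurable F) :
    IdentDistrib (fun ω => F fun i => ξ (i + t) ω) (fun ω => F fun i => ξ i ω) P P where
  aemeasurable_fst := (hF.comp (measurable_pi_lambda _ fun i => hmeas (i + t))).aemeasurable
  aemeasurable_snd := (hF.comp (measurable_pi_lambda _ fun i => hmeas i)).aemeasurable
  map_eq := by
    have h1 := Measure.map_map (μ := P) hF (measurable_pi_lambda _ fun i => hmeas (i + t))
    have h2 := Measure.map_map (μ := P) hF (measurable_pi_lambda _ fun i => hmeas i)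
    rw [hstat t, h2] at h1
    exact h1.symm

/-- Covariance inequality for functions of two sites each, separated by the distance `r` in
direction `k`; stationarity moves the hyperplane at `s` to the origin. -/
lemma cov_field_le (hstat : StrictStationary ξ P) (hmeas : ∀ i, Measurable (ξ i))
    {F G : (Fin p → ℝ) × (Fin p → ℝ) → ℝ} (hF : Measurable F) (hG : Measurable G)
    (a b c d : Fin q → ℤ) (k : Fin q) (s r : ℤ) (hr : 1 ≤ r)
    (ha : a k ≤ s) (hb : b k ≤ s) (hc : s + r ≤ c k) (hd : s + r ≤ d k)
    (hX2 : Integrable (fun ω => F (ξ a ω, ξ b ω) ^ 2) P)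
    (hY2 : Integrable (fun ω => G (ξ c ω, ξ d ω) ^ 2) P) :
    |∫ ω, F (ξ a ω, ξ b ω) * G (ξ c ω, ξ d ω) ∂P -
      (∫ ω, F (ξ a ω, ξ b ω) ∂P) * ∫ ω, G (ξ c ω, ξ d ω) ∂P| ≤
      2 * √(phiMix ξ P r) * √(∫ ω, F (ξ a ω, ξ b ω) ^ 2 ∂P)
        * √(∫ ω, G (ξ c ω, ξ d ω) ^ 2 ∂P) := by
  set t : Fin q → ℤ := fun _ => -s with ht
  have ev : ∀ i : Fin q → ℤ, Measurable fun x : (Fin q → ℤ) → Fin p → ℝ => x i :=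
    fun i => measurable_pi_apply i
  have mF : Measurable fun x : (Fin q → ℤ) → Fin p → ℝ => F (x a, x b) :=
    hF.comp ((ev a).prodMk (ev b))
  have mG : Measurable fun x : (Fin q → ℤ) → Fin p → ℝ => G (x c, x d) :=
    hG.comp ((ev c).prodMk (ev d))
  have i1 := hstat.identDistrib hmeas t mF
  have i2 := hstat.identDistrib hmeas t mG
  have i3 := hstat.identDistrib hmeas t (mF.mul mG)
  have i4 := hstat.identDistrib hmeas t (mF.pow_const 2)
  have i5 := hstat.identDistrib hmeas t (mG.pow_const 2)
  have h := cov_le P (sigmaLE_le hmeas k 0) (sigmaGE_le hmeas k r) (phiMix_nonneg P ξ r)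
    (phiMix_event P ξ k hr)
    (fun ω => F (ξ (a + t) ω, ξ (b + t) ω)) (fun ω => G (ξ (c + t) ω, ξ (d + t) ω))
    (hF.comp ((measurable_sigmaLE ξ (by simp [ht]; omega)).prodMk
      (measurable_sigmaLE ξ (by simp [ht]; omega))))
    (hG.comp ((measurable_sigmaGE ξ (by simp [ht]; omega)).prodMk
      (measurable_sigmaGE ξ (by simp [ht]; omega))))
    (i4.integrable_iff.2 hX2) (i5.integrable_iff.2 hY2)
  have e1 := i1.integral_eq
  have e2 := i2.integral_eq
  have e3 := i3.integral_eq
  have e4 := i4.integral_eq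
  have e5 := i5.integral_eq
  simp only [Pi.mul_apply] at e3
  rwa [e1, e2, e3, e4, e5] at h

/-- Sup norm on `ℤ^q`. -/
def supN (h : Fin q → ℤ) : ℕ := Finset.univ.sup fun k => (h k).natAbs

lemma natAbs_le_supN (h : Fin q → ℤ) (k : Fin q) : (h k).natAbs ≤ supN h :=
  Finset.le_sup (f := fun k => (h k).natAbs) (Finset.mem_univ k)

lemma exists_natAbs_eq_supN [Nonempty (Fin q)] (h : Fin q → ℤ) :
    ∃ k, (h k).natAbs = supN h := by
  obtain ⟨k, _, hk⟩ := Finset.exists_mem_eq_sup Finset.univ Finset.univ_nonempty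
    (fun k => (h k).natAbs)
  exact ⟨k, hk.symm⟩

/-- Covariances of products at lag `j`, as a function of the displacement of the two sites. For
`|i' - i| ≤ |j|` the factor `phiMix` is `1` and the bound is Cauchy–Schwarz; otherwise the two
pairs of sites are separated by at least `|i' - i| - |j|` in some direction. -/
lemma cov_shift_le [Nonempty (Fin q)] (hstat : StrictStationary ξ P)
    (hmeas : ∀ i, Measurable (ξ i))
    {F G : (Fin p → ℝ) × (Fin p → ℝ) → ℝ} (hF : Measurable F) (hG : Measurable G)
    (j i i' : Fin q → ℤ) {M : ℝ} (hM : 0 ≤ M)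
    (hX2 : Integrable (fun ω => F (ξ i ω, ξ (i + j) ω) ^ 2) P)
    (hY2 : Integrable (fun ω => G (ξ i' ω, ξ (i' + j) ω) ^ 2) P)
    (hXM : ∫ ω, F (ξ i ω, ξ (i + j) ω) ^ 2 ∂P ≤ M)
    (hYM : ∫ ω, G (ξ i' ω, ξ (i' + j) ω) ^ 2 ∂P ≤ M) :
    |∫ ω, F (ξ i ω, ξ (i + j) ω) * G (ξ i' ω, ξ (i' + j) ω) ∂P -
      (∫ ω, F (ξ i ω, ξ (i + j) ω) ∂P) * ∫ ω, G (ξ i' ω, ξ (i' + j) ω) ∂P| ≤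
      2 * M * √(phiMix ξ P ((supN (i' - i) : ℤ) - supN j)) := by
  have fin : ∀ r, 2 * √(phiMix ξ P r) * √(∫ ω, F (ξ i ω, ξ (i + j) ω) ^ 2 ∂P) *
      √(∫ ω, G (ξ i' ω, ξ (i' + j) ω) ^ 2 ∂P) ≤ 2 * M * √(phiMix ξ P r) := by
    intro r
    have h1 := mul_le_mul (Real.sqrt_le_sqrt hXM) (Real.sqrt_le_sqrt hYM) (Real.sqrt_nonneg _)
      (Real.sqrt_nonneg _)
    rw [Real.mul_self_sqrt hM] at h1
    have := mul_le_mul_of_nonneg_left h1 (Real.sqrt_nonneg (phiMix ξ P r))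
    linarith
  have mX : Measurable fun ω => F (ξ i ω, ξ (i + j) ω) :=
    hF.comp ((hmeas _).prodMk (hmeas _))
  have mY : Measurable fun ω => G (ξ i' ω, ξ (i' + j) ω) :=
    hG.comp ((hmeas _).prodMk (hmeas _))
  refine le_trans ?_ (fin _)
  by_cases hr : 1 ≤ (supN (i' - i) : ℤ) - supN j
  · obtain ⟨k, hk⟩ := exists_natAbs_eq_supN (i' - i)
    have hj := natAbs_le_supN j k
    rw [Pi.sub_apply] at hk
    rcases le_total (i k) (i' k) with hle | hle
    · exact cov_field_le hstat hmeas hF hG _ _ _ _ k (max (i k) (i k + j k)) _ hr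
        (le_max_left _ _) (by simp) (by omega) (by simp only [Pi.add_apply]; omega) hX2 hY2
    · have := cov_field_le hstat hmeas hG hF i' (i' + j) i (i + j) k (max (i' k) (i' k + j k))
        ((supN (i' - i) : ℤ) - supN j) hr
        (le_max_left _ _) (by simp) (by omega) (by simp only [Pi.add_apply]; omega) hY2 hX2
      simp_rw [mul_comm (G _)] at this
      rw [mul_comm (∫ ω, G (ξ i' ω, ξ (i' + j) ω) ∂P)] at this
      linarith
  · have h1 : phiMix ξ P ((supN (i' - i) : ℤ) - supN j) = 1 := by
      rw [phiMix, if_pos (by omega)]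
    rw [h1]
    refine cov_le P le_rfl le_rfl zero_le_one (fun A B _ _ => ?_) _ _ mX mY hX2 hY2
    have a1 : P.real (A ∩ B) ≤ P.real A := measureReal_mono Set.inter_subset_left
    have a2 : 0 ≤ P.real (A ∩ B) := measureReal_nonneg
    have a3 : P.real B ≤ 1 := measureReal_le_one
    have a4 : 0 ≤ P.real B := measureReal_nonneg
    have a5 : 0 ≤ P.real A := measureReal_nonneg
    rw [abs_le]
    constructor <;> nlinarith

end Field

/-! ### Counting lattice points -/

section Counting

variable {q : ℕ}

/-- The sphere of radius `l` in sup norm lies in `2q` faces of `(2l + 1)^{q-1}` points each. -/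
lemma card_supN_eq_le (s : Finset (Fin q → ℤ)) (hq : 0 < q) (l : ℕ) :
    #{h ∈ s | supN h = l} ≤ 2 * q * (2 * l + 1) ^ (q - 1) := by
  classical
  have : Nonempty (Fin q) := ⟨⟨0, hq⟩⟩
  let B : Fin q → Finset (Fin q → ℤ) := fun k =>
    Fintype.piFinset fun i => if i = k then {(l : ℤ), -(l : ℤ)} else Finset.Icc (-(l : ℤ)) l
  have hsub : {h ∈ s | supN h = l} ⊆ Finset.univ.biUnion B := by
    intro h hh
    have hl := (Finset.mem_filter.1 hh).2
    obtain ⟨k, hk⟩ := exists_natAbs_eq_supN h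
    refine Finset.mem_biUnion.2 ⟨k, Finset.mem_univ _, Fintype.mem_piFinset.2 fun i => ?_⟩
    have hi := natAbs_le_supN h i
    split_ifs with hik
    · subst hik
      simp only [Finset.mem_insert, Finset.mem_singleton]
      omega
    · rw [Finset.mem_Icc]
      omega
  have hB : ∀ k ∈ Finset.univ, #(B k) ≤ 2 * (2 * l + 1) ^ (q - 1) := by
    intro k _
    rw [Fintype.card_piFinset, ← Finset.mul_prod_erase _ _ (Finset.mem_univ k)]
    refine Nat.mul_le_mul ?_ ?_
    · simpa using Finset.card_le_two
    · have : ∀ i ∈ Finset.univ.erase k,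
          #(if i = k then {(l : ℤ), -(l : ℤ)} else Finset.Icc (-(l : ℤ)) l) = 2 * l + 1 := by
        intro i hi
        rw [if_neg (Finset.ne_of_mem_erase hi), Int.card_Icc]
        omega
      rw [Finset.prod_congr rfl this, Finset.prod_const, Finset.card_erase_of_mem (Finset.mem_univ k)]
      simp
  calc #{h ∈ s | supN h = l} ≤ #(Finset.univ.biUnion B) := Finset.card_le_card hsub
    _ ≤ #(Finset.univ : Finset (Fin q)) * (2 * (2 * l + 1) ^ (q - 1)) :=
        Finset.card_biUnion_le_card_mul _ _ _ hB
    _ = _ := by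
        rw [Finset.card_univ, Fintype.card_fin]
        ring

/-- Summing a radial function with `∑ r^{q-1} ψ(r) < ∞` and `ψ = 1` on `r ≤ 0`, shifted by `J`,
over `ℤ^q` costs at most the volume of a ball of radius `J`. -/
lemma sum_radial_le (hq : 0 < q) (ψ : ℤ → ℝ) (h0 : ∀ r, 0 ≤ ψ r) (h1 : ∀ r ≤ 0, ψ r = 1)
    (hs : Summable fun r : ℕ => (r : ℝ) ^ (q - 1) * ψ r) :
    ∃ K : ℝ, 0 ≤ K ∧ ∀ (J : ℕ) (s : Finset (Fin q → ℤ)),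
      ∑ h ∈ s, ψ ((supN h : ℤ) - J) ≤ K * ((J : ℝ) + 1) ^ q := by
  obtain ⟨d, rfl⟩ : ∃ d, q = d + 1 := ⟨q - 1, by omega⟩
  simp only [Nat.add_sub_cancel] at hs
  set S := ∑' r : ℕ, (r : ℝ) ^ d * ψ r with hS
  have hS0 : 0 ≤ S := tsum_nonneg fun r => mul_nonneg (by positivity) (h0 _)
  set Q : ℝ := 2 * ((d : ℝ) + 1) with hQ
  have hQ0 : 0 ≤ Q := by positivity
  refine ⟨Q * 2 ^ d + Q * 3 ^ d * S, by positivity, fun J s => ?_⟩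
  set R : ℕ := s.sup supN with hR
  have hmaps : ∀ h ∈ s, supN h ∈ Finset.range (J + 1 + R) := fun h hh => by
    have := Finset.le_sup (f := supN) hh
    rw [Finset.mem_range]
    omega
  rw [← Finset.sum_fiberwise_of_maps_to hmaps]
  have hfib : ∀ l ∈ Finset.range (J + 1 + R), ∑ h ∈ s with supN h = l, ψ ((supN h : ℤ) - J) ≤
      Q * (2 * (l : ℝ) + 1) ^ d * ψ ((l : ℤ) - J) := by
    intro l _
    have e : ∑ h ∈ s with supN h = l, ψ ((supN h : ℤ) - J) =
        #{h ∈ s | supN h = l} * ψ ((l : ℤ) - J) := by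
      rw [Finset.sum_congr rfl (g := fun _ => ψ ((l : ℤ) - J)), Finset.sum_const, nsmul_eq_mul]
      intro h hh
      rw [(Finset.mem_filter.1 hh).2]
    rw [e]
    refine mul_le_mul_of_nonneg_right ?_ (h0 _)
    have := card_supN_eq_le s hq l
    simp only [Nat.add_sub_cancel] at this
    have h2 : ((#{h ∈ s | supN h = l} : ℕ) : ℝ) ≤ ((2 * (d + 1) * (2 * l + 1) ^ d : ℕ) : ℝ) := by
      exact_mod_cast this
    push_cast at h2
    exact h2
  refine (Finset.sum_le_sum hfib).trans ?_
  rw [Finset.sum_range_add]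
  have hJ : (0 : ℝ) ≤ J := Nat.cast_nonneg J
  have p1 : ∑ l ∈ Finset.range (J + 1), Q * (2 * (l : ℝ) + 1) ^ d * ψ ((l : ℤ) - J) ≤
      Q * 2 ^ d * ((J : ℝ) + 1) ^ (d + 1) := by
    calc ∑ l ∈ Finset.range (J + 1), Q * (2 * (l : ℝ) + 1) ^ d * ψ ((l : ℤ) - J)
        ≤ ∑ l ∈ Finset.range (J + 1), Q * (2 * ((J : ℝ) + 1)) ^ d := by
          refine Finset.sum_le_sum fun l hl => ?_
          have hl' := Finset.mem_range.1 hl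
          rw [h1 _ (by omega), mul_one]
          have : (l : ℝ) ≤ J := by exact_mod_cast Nat.lt_succ_iff.1 hl'
          gcongr
          linarith
      _ = Q * 2 ^ d * ((J : ℝ) + 1) ^ (d + 1) := by
          rw [Finset.sum_const, Finset.card_range, nsmul_eq_mul, mul_pow]
          push_cast
          ring
  have p2 : ∑ r ∈ Finset.range R, Q * (2 * ((J + 1 + r : ℕ) : ℝ) + 1) ^ d *
      ψ (((J + 1 + r : ℕ) : ℤ) - J) ≤ Q * 3 ^ d * S * ((J : ℝ) + 1) ^ (d + 1) := by
    have b1 : ∑ r ∈ Finset.range R, (((r + 1 : ℕ) : ℝ)) ^ d * ψ ((r + 1 : ℕ) : ℤ) ≤ S := by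
      have := hs.sum_le_tsum (Finset.range (R + 1)) fun r _ => mul_nonneg (by positivity) (h0 _)
      rw [Finset.sum_range_succ'] at this
      have h00 : 0 ≤ (((0 : ℕ) : ℝ)) ^ d * ψ ((0 : ℕ) : ℤ) := mul_nonneg (by positivity) (h0 _)
      linarith
    calc _ ≤ ∑ r ∈ Finset.range R, Q * 3 ^ d * ((J : ℝ) + 1) ^ d *
          ((((r + 1 : ℕ) : ℝ)) ^ d * ψ ((r + 1 : ℕ) : ℤ)) := by
          refine Finset.sum_le_sum fun r _ => ?_
          have e1 : ((J + 1 + r : ℕ) : ℤ) - J = ((r + 1 : ℕ) : ℤ) := by push_cast; ring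
          rw [e1]
          have hr : (0 : ℝ) ≤ r := Nat.cast_nonneg r
          have e2 : (2 * ((J + 1 + r : ℕ) : ℝ) + 1) ^ d ≤
              (3 * ((J : ℝ) + 1) * ((r + 1 : ℕ) : ℝ)) ^ d := by
            push_cast
            refine pow_le_pow_left₀ (by positivity) ?_ _
            nlinarith [mul_nonneg hJ hr]
          rw [mul_pow, mul_pow] at e2
          have := mul_le_mul_of_nonneg_right (mul_le_mul_of_nonneg_left e2 hQ0)
            (h0 ((r + 1 : ℕ) : ℤ))
          refine this.trans (le_of_eq ?_)
          ring
      _ ≤ Q * 3 ^ d * ((J : ℝ) + 1) ^ d * S := by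
          rw [← Finset.mul_sum]
          gcongr
      _ ≤ Q * 3 ^ d * ((J : ℝ) + 1) ^ (d + 1) * S := by
          gcongr
          · linarith
          · omega
      _ = _ := by ring
  linarith

end Counting

/-! ### Sample autocovariances -/

section Autocov

variable [mΩ : MeasurableSpace Ω] {q p : ℕ} {P : Measure Ω} [IsProbabilityMeasure P]
  {ξ : (Fin q → ℤ) → Ω → (Fin p → ℝ)}

omit [IsProbabilityMeasure P] in
/-- The products `ξ_i^{(ν)} ξ_{i+j}^{(μ)}` are square integrable, with mean `γ(j)` and a common
bound on the second moments. -/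
lemma prod_moments (hmeas : ∀ i, Measurable (ξ i)) (hstat : StrictStationary ξ P)
    (hmom : ∀ k, Integrable (fun ω => (ξ 0 ω k) ^ 4) P) (ν μ : Fin p) (i j : Fin q → ℤ) :
    Integrable (fun ω => (ξ i ω ν * ξ (i + j) ω μ) ^ 2) P ∧
    ∫ ω, (ξ i ω ν * ξ (i + j) ω μ) ^ 2 ∂P ≤ ∫ ω, ξ 0 ω ν ^ 4 ∂P + ∫ ω, ξ 0 ω μ ^ 4 ∂P ∧
    ∫ ω, ξ i ω ν * ξ (i + j) ω μ ∂P = acov ξ P j ν μ := by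
  have mc : ∀ i k, Measurable fun ω => ξ i ω k := fun i k =>
    (measurable_pi_apply k).comp (hmeas i)
  have ev : ∀ (i : Fin q → ℤ) (k : Fin p),
      Measurable fun x : (Fin q → ℤ) → Fin p → ℝ => x i k :=
    fun i k => (measurable_pi_apply k).comp (measurable_pi_apply i)
  have h4 : ∀ (i : Fin q → ℤ) (k : Fin p), Integrable (fun ω => ξ i ω k ^ 4) P ∧
      ∫ ω, ξ i ω k ^ 4 ∂P = ∫ ω, ξ 0 ω k ^ 4 ∂P := by
    intro i k
    have := hstat.identDistrib hmeas i ((ev 0 k).pow_const 4)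
    simp only [zero_add] at this
    exact ⟨this.integrable_iff.2 (hmom k), this.integral_eq⟩
  have hb : ∀ ω, (ξ i ω ν * ξ (i + j) ω μ) ^ 2 ≤ ξ i ω ν ^ 4 + ξ (i + j) ω μ ^ 4 := fun ω => by
    nlinarith [sq_nonneg (ξ i ω ν ^ 2 - ξ (i + j) ω μ ^ 2), sq_nonneg (ξ i ω ν ^ 2),
      sq_nonneg (ξ (i + j) ω μ ^ 2)]
  have hI : Integrable (fun ω => (ξ i ω ν * ξ (i + j) ω μ) ^ 2) P :=
    ((h4 i ν).1.add (h4 (i + j) μ).1).mono'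
      (((mc i ν).mul (mc (i + j) μ)).pow_const 2).aestronglyMeasurable
      (Eventually.of_forall fun ω => by
        rw [Real.norm_eq_abs, abs_of_nonneg (sq_nonneg _)]
        exact hb ω)
  refine ⟨hI, ?_, ?_⟩
  · refine (integral_mono hI ((h4 i ν).1.add (h4 (i + j) μ).1) hb).trans (le_of_eq ?_)
    rw [← (h4 i ν).2, ← (h4 (i + j) μ).2]
    exact integral_add (h4 i ν).1 (h4 (i + j) μ).1
  · have := hstat.identDistrib hmeas i ((ev 0 ν).mul (ev j μ))
    simp only [Pi.mul_apply, zero_add] at this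
    rw [acov, ← this.integral_eq]
    simp_rw [add_comm i j]

lemma integrable_of_sq {X : Ω → ℝ} (hX : Measurable X) (h : Integrable (fun ω => X ω ^ 2) P) :
    Integrable X P :=
  ((memLp_two_iff_integrable_sq hX.aestronglyMeasurable).2 h).integrable (by norm_num)

lemma integral_abs_le_sqrt {X : Ω → ℝ} (hX : Measurable X)
    (h : Integrable (fun ω => X ω ^ 2) P) : ∫ ω, |X ω| ∂P ≤ √(∫ ω, X ω ^ 2 ∂P) := by
  have hL : MemLp (fun ω => |X ω|) 2 P :=
    ((memLp_two_iff_integrable_sq hX.aestronglyMeasurable).2 h).abs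
  have h1 := variance_nonneg (fun ω => |X ω|) P
  rw [variance_eq_sub hL] at h1
  simp only [Pi.pow_apply, sq_abs] at h1
  exact Real.le_sqrt_of_sq_le (by linarith)

lemma measurable_acovHat (hmeas : ∀ i, Measurable (ξ i)) (n : Fin q → ℕ) (j : Fin q → ℤ)
    (ν μ : Fin p) : Measurable fun ω => acovHat ξ n j ω ν μ := by
  have mc : ∀ i k, Measurable fun ω => ξ i ω k := fun i k =>
    (measurable_pi_apply k).comp (hmeas i)
  exact (Finset.measurable_sum _ fun i _ => (mc i ν).mul (mc (i + j) μ)).const_mul _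

/-- Mean square error of the sample autocovariances: the double sum of covariances over
`Γ̃_n(j)²` is at most `|Γ̃_n(j)|` times a constant multiple of `(|j| + 1)^q`. -/
lemma acovHat_mse_le [Nonempty (Fin q)] (hmeas : ∀ i, Measurable (ξ i))
    (hstat : StrictStationary ξ P)
    (hmom : ∀ k, Integrable (fun ω => (ξ 0 ω k) ^ 4) P)
    (hphisum : Summable (fun r : ℕ => (r : ℝ) ^ (q - 1) * √(phiMix ξ P (r : ℤ))))
    (ν μ : Fin p) :
    ∃ C : ℝ, 0 ≤ C ∧ ∀ (n : Fin q → ℕ) (j : Fin q → ℤ), (boxJ q n j).Nonempty →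
      Integrable (fun ω => (acovHat ξ n j ω ν μ - acov ξ P j ν μ) ^ 2) P ∧
      ∫ ω, (acovHat ξ n j ω ν μ - acov ξ P j ν μ) ^ 2 ∂P ≤
        C * ((supN j : ℝ) + 1) ^ q / #(boxJ q n j) := by
  have hq : 0 < q := Fin.pos_iff_nonempty.2 inferInstance
  obtain ⟨K, hK0, hK⟩ := sum_radial_le hq (fun r => √(phiMix ξ P r)) (fun r => Real.sqrt_nonneg _)
    (fun r hr => by simp [phiMix, hr]) hphisum
  set M : ℝ := ∫ ω, ξ 0 ω ν ^ 4 ∂P + ∫ ω, ξ 0 ω μ ^ 4 ∂P with hM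
  have hM0 : 0 ≤ M := add_nonneg (integral_nonneg fun ω => by positivity)
    (integral_nonneg fun ω => by positivity)
  refine ⟨2 * M * K, by positivity, fun n j hne => ?_⟩
  have mc : ∀ i k, Measurable fun ω => ξ i ω k := fun i k =>
    (measurable_pi_apply k).comp (hmeas i)
  set Z : (Fin q → ℤ) → Ω → ℝ := fun i ω => ξ i ω ν * ξ (i + j) ω μ with hZ
  have mZ : ∀ i, Measurable (Z i) := fun i => (mc i ν).mul (mc (i + j) μ)
  have hmo := fun i => prod_moments hmeas hstat hmom ν μ i j
  set γ := acov ξ P j ν μ with hγ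
  have iZ : ∀ i, Integrable (Z i) P := fun i => integrable_of_sq (mZ i) (hmo i).1
  have lZ : ∀ i, MemLp (Z i) 2 P := fun i =>
    (memLp_two_iff_integrable_sq (mZ i).aestronglyMeasurable).2 (hmo i).1
  have lZc : ∀ i, MemLp (fun ω => Z i ω - γ) 2 P := fun i => (lZ i).sub (memLp_const γ)
  have iZZ : ∀ i i', Integrable (fun ω => (Z i ω - γ) * (Z i' ω - γ)) P := fun i i' =>
    (lZc i).integrable_mul (lZc i')
  have hcov : ∀ i i', ∫ ω, (Z i ω - γ) * (Z i' ω - γ) ∂P ≤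
      2 * M * √(phiMix ξ P ((supN (i' - i) : ℤ) - supN j)) := by
    intro i i'
    have hF : Measurable fun x : (Fin p → ℝ) × (Fin p → ℝ) => x.1 ν * x.2 μ :=
      ((measurable_pi_apply ν).comp measurable_fst).mul
        ((measurable_pi_apply μ).comp measurable_snd)
    have h := cov_shift_le hstat hmeas hF hF j i i' hM0 (hmo i).1 (hmo i').1 (hmo i).2.1
      (hmo i').2.1
    simp only at h
    rw [(hmo i).2.2, (hmo i').2.2] at h
    refine le_trans (le_of_eq ?_) ((le_abs_self _).trans h)
    have e : ∀ ω, (Z i ω - γ) * (Z i' ω - γ) = Z i ω * Z i' ω - γ * Z i ω - γ * Z i' ω + γ * γ :=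
      fun ω => by ring
    simp_rw [e]
    have iP : Integrable (fun ω => Z i ω * Z i' ω) P := (lZ i).integrable_mul (lZ i')
    have j1 := (iZ i).const_mul γ
    have j2 := (iZ i').const_mul γ
    have j3 : Integrable (fun ω => Z i ω * Z i' ω - γ * Z i ω) P := iP.sub j1
    have j4 : Integrable (fun ω => Z i ω * Z i' ω - γ * Z i ω - γ * Z i' ω) P := j3.sub j2
    rw [integral_add j4 (integrable_const _), integral_sub j3 j2,
      integral_sub iP j1, integral_const_mul, integral_const_mul]
    have z1 : ∫ ω, Z i ω ∂P = γ := (hmo i).2.2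
    have z2 : ∫ ω, Z i' ω ∂P = γ := (hmo i').2.2
    rw [z1, z2]
    simp [hZ]
  set N := boxJ q n j with hN
  have hNpos : (0 : ℝ) < #N := by exact_mod_cast hne.card_pos
  have hexp : ∀ ω, (acovHat ξ n j ω ν μ - γ) ^ 2 =
      ((#N : ℝ)⁻¹) ^ 2 * ∑ i ∈ N, ∑ i' ∈ N, (Z i ω - γ) * (Z i' ω - γ) := by
    intro ω
    rw [← Finset.sum_mul_sum, ← sq, ← mul_pow, Finset.sum_sub_distrib, Finset.sum_const,
      nsmul_eq_mul, mul_sub, inv_mul_cancel_left₀ hNpos.ne']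
    rfl
  simp_rw [hexp]
  have iS : ∀ i ∈ N, Integrable (fun ω => ∑ i' ∈ N, (Z i ω - γ) * (Z i' ω - γ)) P := fun i _ =>
    integrable_finsetSum _ fun i' _ => iZZ i i'
  refine ⟨(integrable_finsetSum _ iS).const_mul _, ?_⟩
  rw [integral_const_mul, integral_finsetSum _ iS]
  have hrow : ∀ i ∈ N, ∫ ω, ∑ i' ∈ N, (Z i ω - γ) * (Z i' ω - γ) ∂P ≤
      2 * M * (K * ((supN j : ℝ) + 1) ^ q) := by
    intro i _
    rw [integral_finsetSum _ fun i' _ => iZZ i i']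
    refine (Finset.sum_le_sum fun i' _ => hcov i i').trans ?_
    rw [← Finset.mul_sum]
    refine mul_le_mul_of_nonneg_left ?_ (by positivity)
    have := hK (supN j) (N.map (Equiv.subRight i).toEmbedding)
    rw [Finset.sum_map] at this
    exact this
  have := mul_le_mul_of_nonneg_left (Finset.sum_le_sum hrow) (sq_nonneg ((#N : ℝ)⁻¹))
  refine this.trans (le_of_eq ?_)
  rw [Finset.sum_const, nsmul_eq_mul]
  field_simp

/-- Absolute summability of the autocovariances. -/
lemma summable_abs_acov [Nonempty (Fin q)] (hmeas : ∀ i, Measurable (ξ i))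
    (hstat : StrictStationary ξ P)
    (hmean : ∀ k, ∫ ω, ξ 0 ω k ∂P = 0)
    (hmom : ∀ k, Integrable (fun ω => (ξ 0 ω k) ^ 4) P)
    (hphisum : Summable (fun r : ℕ => (r : ℝ) ^ (q - 1) * √(phiMix ξ P (r : ℤ))))
    (ν μ : Fin p) : Summable fun j => |acov ξ P j ν μ| := by
  have hq : 0 < q := Fin.pos_iff_nonempty.2 inferInstance
  obtain ⟨K, hK0, hK⟩ := sum_radial_le hq (fun r => √(phiMix ξ P r)) (fun r => Real.sqrt_nonneg _)
    (fun r hr => by simp [phiMix, hr]) hphisum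
  have mc : ∀ i k, Measurable fun ω => ξ i ω k := fun i k =>
    (measurable_pi_apply k).comp (hmeas i)
  have ev : ∀ k : Fin p, Measurable fun x : (Fin q → ℤ) → Fin p → ℝ => x 0 k :=
    fun k => (measurable_pi_apply k).comp (measurable_pi_apply 0)
  have h2 : ∀ (i : Fin q → ℤ) (k : Fin p), Integrable (fun ω => ξ i ω k ^ 2) P ∧
      ∫ ω, ξ i ω k ^ 2 ∂P = ∫ ω, ξ 0 ω k ^ 2 ∂P := by
    intro i k
    have hid := hstat.identDistrib hmeas i ((ev k).pow_const 2)
    simp only [zero_add] at hid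
    refine ⟨hid.integrable_iff.2 ?_, hid.integral_eq⟩
    refine ((integrable_const (1 : ℝ)).add (hmom k)).mono'
      ((mc 0 k).pow_const 2).aestronglyMeasurable (Eventually.of_forall fun ω => ?_)
    rw [Real.norm_eq_abs, abs_of_nonneg (sq_nonneg _), Pi.add_apply]
    nlinarith [sq_nonneg (ξ 0 ω k ^ 2 - 1), sq_nonneg (ξ 0 ω k ^ 2)]
  set M : ℝ := ∫ ω, ξ 0 ω ν ^ 2 ∂P + ∫ ω, ξ 0 ω μ ^ 2 ∂P with hM
  have n1 : 0 ≤ ∫ ω, ξ 0 ω ν ^ 2 ∂P := integral_nonneg fun ω => sq_nonneg _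
  have n2 : 0 ≤ ∫ ω, ξ 0 ω μ ^ 2 ∂P := integral_nonneg fun ω => sq_nonneg _
  have hM0 : 0 ≤ M := add_nonneg n1 n2
  have hb : ∀ j, |acov ξ P j ν μ| ≤ 2 * M * √(phiMix ξ P ((supN j : ℤ) - (0 : ℕ))) := by
    intro j
    have hF : ∀ k : Fin p, Measurable fun x : (Fin p → ℝ) × (Fin p → ℝ) => x.1 k := fun k =>
      (measurable_pi_apply k).comp measurable_fst
    have h := cov_shift_le hstat hmeas (hF ν) (hF μ) 0 0 j hM0 (h2 0 ν).1 (h2 j μ).1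
      (by linarith) (by rw [(h2 j μ).2]; linarith)
    simp only [hmean, zero_mul, sub_zero] at h
    have h0 : supN (0 : Fin q → ℤ) = 0 := by
      obtain ⟨k, hk⟩ := exists_natAbs_eq_supN (0 : Fin q → ℤ)
      simpa using hk.symm
    rw [h0] at h
    exact h
  refine Summable.of_nonneg_of_le (fun j => abs_nonneg _) hb (Summable.mul_left _ ?_)
  exact summable_of_sum_le (fun j => Real.sqrt_nonneg _) fun s => hK 0 s

end Autocov

/-! ### Size of the index boxes and the stochastic error -/

section Rates

variable {q : ℕ}

lemma card_boxJ_ge (n : Fin q → ℕ) (j : Fin q → ℤ) (m N : ℕ) (hj : supN j ≤ m)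
    (hN : ∀ k, N ≤ n k) (hm : 4 * m ≤ N) : ((N : ℝ) / 2) ^ q ≤ #(boxJ q n j) := by
  have hsub : Finset.Icc (fun _ => (m : ℤ) + 1) (fun k => (n k : ℤ) - m) ⊆ boxJ q n j := by
    intro i hi
    rw [Finset.mem_Icc, Pi.le_def, Pi.le_def] at hi
    rw [boxJ, Finset.mem_filter, _root_.box, Finset.mem_Icc, Finset.mem_Icc, Pi.le_def,
      Pi.le_def, Pi.le_def, Pi.le_def]
    have key : ∀ k, (m : ℤ) + 1 ≤ i k ∧ i k ≤ (n k : ℤ) - m ∧ (j k).natAbs ≤ m := fun k =>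
      ⟨hi.1 k, hi.2 k, (natAbs_le_supN j k).trans hj⟩
    refine ⟨⟨fun k => ?_, fun k => ?_⟩, ⟨fun k => ?_, fun k => ?_⟩⟩ <;>
    · have := key k
      have h1 : (1 : Fin q → ℤ) k = 1 := rfl
      have h2 : (i + j) k = i k + j k := rfl
      omega
  refine le_trans ?_ (Nat.cast_le.2 (Finset.card_le_card hsub))
  rw [Pi.card_Icc, Nat.cast_prod]
  calc ((N : ℝ) / 2) ^ q = ∏ _k : Fin q, ((N : ℝ) / 2) := by
        rw [Finset.prod_const, Finset.card_univ, Fintype.card_fin]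
    _ ≤ _ := by
      refine Finset.prod_le_prod (fun k _ => by positivity) fun k _ => ?_
      rw [Int.card_Icc, div_le_iff₀ two_pos]
      have h := hN k
      have : N ≤ ((n k : ℤ) - m + 1 - (m + 1)).toNat * 2 := by omega
      exact_mod_cast this

lemma card_lags_le (m : Fin q → ℕ) (M : ℕ) (hM : ∀ k, m k ≤ M) :
    (#(lags q m) : ℝ) ≤ (2 * (M : ℝ) + 1) ^ q := by
  rw [lags, Pi.card_Icc, Nat.cast_prod]
  calc _ ≤ ∏ _k : Fin q, (2 * (M : ℝ) + 1) := by
        refine Finset.prod_le_prod (fun k _ => by positivity) fun k _ => ?_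
        rw [Int.card_Icc]
        have h := hM k
        have : ((m k : ℤ) + 1 - -(m k)).toNat ≤ 2 * M + 1 := by omega
        exact_mod_cast this
    _ = _ := by simp

lemma supN_le_of_mem_lags {m : Fin q → ℕ} {M : ℕ} (hM : ∀ k, m k ≤ M) {j : Fin q → ℤ}
    (hj : j ∈ lags q m) : supN j ≤ M := by
  rw [lags, Finset.mem_Icc, Pi.le_def, Pi.le_def] at hj
  refine Finset.sup_le fun k _ => ?_
  have h1 : -(m k : ℤ) ≤ j k := hj.1 k
  have h2 : j k ≤ m k := hj.2 k
  have h3 := hM k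
  omega

variable {p : ℕ}

/-- Accumulated mean error of the sample autocovariances over the lag window. Each of the at most
`(2m* + 1)^q` lags contributes `O((m*/n_*)^{q/2})`, so the total is `O(((m*)³/n_*)^{q/2})`. -/
lemma tendsto_sum_integral_abs_sub [Nonempty (Fin q)] [mΩ : MeasurableSpace Ω] {P : Measure Ω}
    [IsProbabilityMeasure P] {ξ : (Fin q → ℤ) → Ω → (Fin p → ℝ)}
    (hmeas : ∀ i, Measurable (ξ i)) (hstat : StrictStationary ξ P)
    (hmom : ∀ k, Integrable (fun ω => (ξ 0 ω k) ^ 4) P)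
    (hphisum : Summable (fun r : ℕ => (r : ℝ) ^ (q - 1) * √(phiMix ξ P (r : ℤ))))
    (mseq : (Fin q → ℕ) → (Fin q → ℕ))
    (hm1 : Tendsto mseq atTop atTop)
    (hm2 : Tendsto (fun n : Fin q → ℕ =>
      ((⨆ i, mseq n i : ℕ) : ℝ) ^ 3 / ((⨅ i, n i : ℕ) : ℝ)) atTop (𝓝 0)) (ν μ : Fin p) :
    (∀ᶠ n in atTop, ∀ j ∈ lags q (mseq n),
      Integrable (fun ω => |acovHat ξ n j ω ν μ - acov ξ P j ν μ|) P) ∧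
    Tendsto (fun n => ∑ j ∈ lags q (mseq n),
      ∫ ω, |acovHat ξ n j ω ν μ - acov ξ P j ν μ| ∂P) atTop (𝓝 0) := by
  have hq : q ≠ 0 := (Fin.pos_iff_nonempty.2 inferInstance).ne'
  obtain ⟨C, hC0, hC⟩ := acovHat_mse_le hmeas hstat hmom hphisum ν μ
  set M : (Fin q → ℕ) → ℕ := fun n => ⨆ i, mseq n i with hM
  set N : (Fin q → ℕ) → ℕ := fun n => ⨅ i, n i with hN
  have hMle : ∀ n k, mseq n k ≤ M n := fun n k =>
    le_ciSup (f := fun i => mseq n i) (Set.finite_range _).bddAbove k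
  have hNle : ∀ n k, N n ≤ n k := fun n k => ciInf_le (OrderBot.bddBelow _) k
  have ev1 : ∀ᶠ n in atTop, 1 ≤ M n := by
    filter_upwards [hm1.eventually (eventually_ge_atTop (fun _ => 1))] with n hn
    obtain ⟨k⟩ : Nonempty (Fin q) := inferInstance
    exact (hn k).trans (hMle n k)
  have ev2 : ∀ᶠ n in atTop, 1 ≤ N n := by
    filter_upwards [eventually_ge_atTop (fun _ : Fin q => 1)] with n hn
    exact le_ciInf fun k => hn k
  have ev3 : ∀ᶠ n in atTop, 1 ≤ M n ∧ 1 ≤ N n ∧ 4 * M n ≤ N n := by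
    filter_upwards [ev1, ev2, hm2.eventually (gt_mem_nhds (show (0 : ℝ) < 1 / 4 by norm_num))]
      with n h1 h2 h3
    refine ⟨h1, h2, ?_⟩
    have h1' : (1 : ℝ) ≤ M n := by exact_mod_cast h1
    have h2' : (0 : ℝ) < N n := by exact_mod_cast h2
    rw [div_lt_iff₀ h2'] at h3
    have : (M n : ℝ) ≤ (M n : ℝ) ^ 3 := le_self_pow₀ h1' (by norm_num)
    have : 4 * (M n : ℝ) ≤ N n := by linarith
    exact_mod_cast this
  have mD : ∀ n j, Measurable fun ω => acovHat ξ n j ω ν μ - acov ξ P j ν μ := fun n j =>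
    (measurable_acovHat hmeas n j ν μ).sub_const _
  have hlag : ∀ n, 1 ≤ M n ∧ 1 ≤ N n ∧ 4 * M n ≤ N n → ∀ j ∈ lags q (mseq n),
      Integrable (fun ω => |acovHat ξ n j ω ν μ - acov ξ P j ν μ|) P ∧
      ∫ ω, |acovHat ξ n j ω ν μ - acov ξ P j ν μ| ∂P ≤ √(C * (4 * M n / N n) ^ q) := by
    rintro n ⟨h1, h2, h3⟩ j hj
    have hjM := supN_le_of_mem_lags (hMle n) hj
    have h1' : (1 : ℝ) ≤ M n := by exact_mod_cast h1
    have h2' : (0 : ℝ) < N n := by exact_mod_cast h2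
    have hcard := card_boxJ_ge n j (M n) (N n) hjM (hNle n) h3
    have hpos : 0 < ((N n : ℝ) / 2) ^ q := by positivity
    have hne : (boxJ q n j).Nonempty := by
      rw [← Finset.card_pos]
      exact_mod_cast hpos.trans_le hcard
    obtain ⟨hI, hle⟩ := hC n j hne
    refine ⟨(integrable_of_sq (mD n j) hI).abs, ?_⟩
    refine (integral_abs_le_sqrt (mD n j) hI).trans (Real.sqrt_le_sqrt (hle.trans ?_))
    have hjM' : (supN j : ℝ) ≤ M n := by exact_mod_cast hjM
    calc C * ((supN j : ℝ) + 1) ^ q / #(boxJ q n j)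
        ≤ C * (2 * (M n : ℝ)) ^ q / ((N n : ℝ) / 2) ^ q := by
          gcongr
          linarith
      _ = C * (4 * M n / N n) ^ q := by
          rw [mul_div_assoc, ← div_pow]
          congr 2
          field_simp
          ring
  refine ⟨ev3.mono fun n hn j hj => (hlag n hn j hj).1, ?_⟩
  have hlim : Tendsto (fun n => √(C * (36 * ((M n : ℝ) ^ 3 / N n)) ^ q)) atTop (𝓝 0) := by
    have := (((hm2.const_mul 36).pow q).const_mul C).sqrt
    simpa [hq] using this
  refine tendsto_of_tendsto_of_tendsto_of_le_of_le' tendsto_const_nhds hlim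
    (Eventually.of_forall fun n => Finset.sum_nonneg fun j _ =>
      integral_nonneg fun ω => abs_nonneg _) ?_
  filter_upwards [ev3] with n hn
  have h1' : (1 : ℝ) ≤ M n := by exact_mod_cast hn.1
  calc ∑ j ∈ lags q (mseq n), ∫ ω, |acovHat ξ n j ω ν μ - acov ξ P j ν μ| ∂P
      ≤ ∑ _j ∈ lags q (mseq n), √(C * (4 * M n / N n) ^ q) :=
        Finset.sum_le_sum fun j hj => (hlag n hn j hj).2
    _ = #(lags q (mseq n)) * √(C * (4 * M n / N n) ^ q) := by
        rw [Finset.sum_const, nsmul_eq_mul]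
    _ ≤ (3 * (M n : ℝ)) ^ q * √(C * (4 * M n / N n) ^ q) := by
        refine mul_le_mul_of_nonneg_right ?_ (Real.sqrt_nonneg _)
        refine (card_lags_le _ _ (hMle n)).trans ?_
        gcongr
        linarith
    _ = √(C * (36 * ((M n : ℝ) ^ 3 / N n)) ^ q) := by
        have h0 : (0 : ℝ) ≤ (3 * (M n : ℝ)) ^ q := by positivity
        rw [← Real.sqrt_sq h0, ← Real.sqrt_mul (sq_nonneg _)]
        congr 1
        rw [← pow_mul, mul_comm q 2, pow_mul, mul_left_comm, ← mul_pow]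
        congr 2
        ring

end Rates

/-! ### Bias, thresholding and truncation -/

section Bias

variable {ι : Type*} [DecidableEq ι]

/-- Splitting of the error of a thresholded window estimate `∑ w γ̂ g` of `∑ γ` into the stochastic
error, the error due to weights and thresholds, and the truncation error. -/
lemma abs_window_sub_tsum_le (L : Finset ι) (w a g γ : ι → ℝ) {C : ℝ} (hw : ∀ j, |w j| ≤ C)
    (hg : ∀ j, g j ∈ Set.Icc (0 : ℝ) 1) (hγ : Summable fun j => |γ j|) :
    |∑ j ∈ L, w j * (a j * g j) - ∑' j, γ j| ≤
      C * ∑ j ∈ L, |a j - γ j| + ∑ j ∈ L, |γ j| * (|w j - 1| + (1 - g j)) +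
        ∑' j, if j ∈ L then 0 else |γ j| := by
  have hs1 : Summable fun j => if j ∈ L then γ j else 0 :=
    summable_of_ne_finset_zero (s := L) fun j hj => if_neg hj
  have hs2' : Summable fun j => |if j ∈ L then 0 else γ j| :=
    Summable.of_nonneg_of_le (fun j => abs_nonneg _)
      (fun j => by split_ifs <;> simp) hγ
  have hs2 : Summable fun j => if j ∈ L then 0 else γ j := hs2'.of_abs
  have hsplit : ∑' j, γ j = ∑ j ∈ L, γ j + ∑' j, if j ∈ L then 0 else γ j := by
    have e1 : ∑ j ∈ L, γ j = ∑' j, if j ∈ L then γ j else 0 := by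
      rw [tsum_eq_sum (s := L) fun j hj => if_neg hj]
      exact Finset.sum_congr rfl fun j hj => (if_pos hj).symm
    rw [e1, ← hs1.tsum_add hs2]
    refine tsum_congr fun j => ?_
    split_ifs <;> simp
  have htail : |∑' j, if j ∈ L then 0 else γ j| ≤ ∑' j, if j ∈ L then 0 else |γ j| := by
    have h1 := norm_tsum_le_tsum_norm (f := fun j => if j ∈ L then 0 else γ j) hs2'
    simp only [Real.norm_eq_abs] at h1
    refine h1.trans (le_of_eq (tsum_congr fun j => ?_))
    split_ifs <;> simp
  have hmain : |∑ j ∈ L, w j * (a j * g j) - ∑ j ∈ L, γ j| ≤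
      C * ∑ j ∈ L, |a j - γ j| + ∑ j ∈ L, |γ j| * (|w j - 1| + (1 - g j)) := by
    rw [← Finset.sum_sub_distrib, Finset.mul_sum, ← Finset.sum_add_distrib]
    refine (Finset.abs_sum_le_sum_abs _ _).trans (Finset.sum_le_sum fun j _ => ?_)
    obtain ⟨g0, g1⟩ := hg j
    have e : w j * (a j * g j) - γ j =
        w j * g j * (a j - γ j) + γ j * ((w j - 1) * g j - (1 - g j)) := by ring
    rw [e]
    refine (abs_add_le _ _).trans (add_le_add ?_ ?_)
    · rw [abs_mul, abs_mul, abs_of_nonneg g0]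
      refine mul_le_mul_of_nonneg_right ?_ (abs_nonneg _)
      exact (mul_le_of_le_one_right (abs_nonneg _) g1).trans (hw j)
    · rw [abs_mul]
      refine mul_le_mul_of_nonneg_left ?_ (abs_nonneg _)
      refine (abs_sub _ _).trans ?_
      rw [abs_mul, abs_of_nonneg g0, abs_of_nonneg (sub_nonneg.2 g1)]
      exact add_le_add (mul_le_of_le_one_right (abs_nonneg _) g1) le_rfl
  rw [hsplit]
  calc _ = |(∑ j ∈ L, w j * (a j * g j) - ∑ j ∈ L, γ j) -
        ∑' j, if j ∈ L then 0 else γ j| := by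
        congr 1
        ring
    _ ≤ _ := (abs_sub _ _).trans (add_le_add hmain htail)

omit [DecidableEq ι] in
/-- Dominated convergence for window sums of `b j * u n j`, with `b` summable, `u` bounded and
`u n j → 0` for each `j`. -/
lemma tendsto_window_sum_zero {κ : Type*} {l : Filter κ} (L : κ → Finset ι) (b : ι → ℝ)
    (hb0 : ∀ j, 0 ≤ b j) (hb : Summable b) (u : κ → ι → ℝ) (hu0 : ∀ n j, 0 ≤ u n j) {D : ℝ}
    (huD : ∀ n j, u n j ≤ D) (hu : ∀ j, Tendsto (fun n => u n j) l (𝓝 0)) :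
    Tendsto (fun n => ∑ j ∈ L n, b j * u n j) l (𝓝 0) := by
  have hle : ∀ n, ∑ j ∈ L n, b j * u n j ≤ ∑' j, b j * u n j := fun n =>
    Summable.sum_le_tsum _ (fun j _ => mul_nonneg (hb0 j) (hu0 n j))
      (Summable.of_nonneg_of_le (fun j => mul_nonneg (hb0 j) (hu0 n j))
        (fun j => mul_le_mul_of_nonneg_left (huD n j) (hb0 j)) (hb.mul_right D))
  have hlim : Tendsto (fun n => ∑' j, b j * u n j) l (𝓝 (∑' j : ι, (0 : ℝ))) := by
    refine tendsto_tsum_of_dominated_convergence (hb.mul_right D) (fun j => ?_)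
      (Eventually.of_forall fun n j => ?_)
    · simpa using (hu j).const_mul (b j)
    · rw [Real.norm_eq_abs, abs_of_nonneg (mul_nonneg (hb0 j) (hu0 n j))]
      exact mul_le_mul_of_nonneg_left (huD n j) (hb0 j)
  rw [tsum_zero] at hlim
  exact squeeze_zero (fun n => Finset.sum_nonneg fun j _ => mul_nonneg (hb0 j) (hu0 n j)) hle hlim

lemma tendsto_window_tail_zero {κ : Type*} {l : Filter κ} (L : κ → Finset ι) (b : ι → ℝ)
    (hb0 : ∀ j, 0 ≤ b j) (hb : Summable b) (hL : ∀ j, ∀ᶠ n in l, j ∈ L n) :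
    Tendsto (fun n => ∑' j, if j ∈ L n then 0 else b j) l (𝓝 0) := by
  have hlim : Tendsto (fun n => ∑' j, if j ∈ L n then 0 else b j) l (𝓝 (∑' j : ι, (0 : ℝ))) := by
    refine tendsto_tsum_of_dominated_convergence hb (fun j => ?_)
      (Eventually.of_forall fun n j => ?_)
    · refine tendsto_const_nhds.congr' ?_
      filter_upwards [hL j] with n hn
      rw [if_pos hn]
    · split_ifs
      · simpa using hb0 j
      · rw [Real.norm_eq_abs, abs_of_nonneg (hb0 j)]
  rwa [tsum_zero] at hlim

end Bias

lemma norm_le_sum_abs {p : ℕ} (A : Fin p → Fin p → ℝ) : ‖A‖ ≤ ∑ ν, ∑ μ, |A ν μ| := by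
  have h0 : ∀ ν, 0 ≤ ∑ μ, |A ν μ| := fun ν => Finset.sum_nonneg fun μ _ => abs_nonneg _
  refine (pi_norm_le_iff_of_nonneg (Finset.sum_nonneg fun ν _ => h0 ν)).2 fun ν => ?_
  refine le_trans ?_ (Finset.single_le_sum (fun ν _ => h0 ν) (Finset.mem_univ ν))
  refine (pi_norm_le_iff_of_nonneg (h0 ν)).2 fun μ => ?_
  exact Finset.single_le_sum (f := fun μ => |A ν μ|) (fun μ _ => abs_nonneg _) (Finset.mem_univ μ)

/-! ### Consistency -/

/-- Theorem: weak consistency of the matrix-valued thresholding estimator,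
with entrywise (Hadamard) thresholding. -/
theorem sigmaHat_threshold_consistent_multivariate
    {q p : ℕ} [Nonempty (Fin q)] (hp : 0 < p)
    [MeasurableSpace Ω] (P : Measure Ω) [IsProbabilityMeasure P]
    (ξ : (Fin q → ℤ) → Ω → (Fin p → ℝ))
    (hmeas : ∀ i, Measurable (ξ i))
    (hstat : StrictStationary ξ P)
    (hmix : Tendsto (fun r : ℕ => phiMix ξ P (r : ℤ)) atTop (𝓝 0))
    (hmean : ∀ k, ∫ ω, ξ 0 ω k ∂P = 0)
    (hmom : ∀ k, Integrable (fun ω => (ξ 0 ω k) ^ 4) P)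
    (hphisum : Summable (fun r : ℕ => (r : ℝ) ^ (q - 1) * Real.sqrt (phiMix ξ P (r : ℤ))))
    (w : (Fin q → ℕ) → (Fin q → ℤ) → ℝ)
    (hW1 : ∀ j : Fin q → ℤ, Tendsto (fun m : Fin q → ℕ => w m j) atTop (𝓝 1))
    (hW2 : ∃ C : ℝ, ∀ m j, |w m j| ≤ C)
    (mseq : (Fin q → ℕ) → (Fin q → ℕ))
    (hm1 : Tendsto mseq atTop atTop)
    (hm2 : Tendsto (fun n : Fin q → ℕ =>
      ((⨆ i, mseq n i : ℕ) : ℝ) ^ 3 / ((⨅ i, n i : ℕ) : ℝ)) atTop (𝓝 0))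
    -- Assumption 2, applied entrywise
    (g : ℝ → ℝ → ℝ)
    (hgmeas : Measurable (Function.uncurry g))
    (hgrange : ∀ x c : ℝ, 0 ≤ c → g x c ∈ Set.Icc (0 : ℝ) 1)
    (c : (Fin q → ℕ) → (Fin q → ℤ) → ℝ)
    (hc : ∀ n j, 0 ≤ c n j)
    (hg : ∀ (j : Fin q → ℤ) (ν μ : Fin p),
      Tendsto (fun n : Fin q → ℕ => ∫ ω, g (acovHat ξ n j ω ν μ) (c n j) ∂P) atTop (𝓝 1)) :
    ∀ ε : ℝ, 0 < ε →
      Tendsto (fun n : Fin q → ℕ =>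
        P {ω | ε < ‖(∑ j ∈ lags q (mseq n),
          w (mseq n) j • (fun ν μ : Fin p =>
            acovHat ξ n j ω ν μ * g (acovHat ξ n j ω ν μ) (c n j))) -
              (∑' j : Fin q → ℤ, acov ξ P j)‖})
        atTop (𝓝 0) := by
  intro ε hε
  obtain ⟨C, hC⟩ := hW2
  have hC0 : 0 ≤ C := (abs_nonneg (w 0 0)).trans (hC 0 0)
  have hγ := summable_abs_acov hmeas hstat hmean hmom hphisum
  have htsum : ∀ ν μ, (∑' j : Fin q → ℤ, acov ξ P j) ν μ = ∑' j, acov ξ P j ν μ := fun ν μ => by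
    have s1 : ∀ ν, Summable fun j => acov ξ P j ν := fun ν =>
      Pi.summable.2 fun μ => (hγ ν μ).of_abs
    have s2 : Summable fun j => acov ξ P j := Pi.summable.2 s1
    rw [tsum_apply s2, tsum_apply (s1 ν)]
  have mG : ∀ n j ν μ, Measurable fun ω => g (acovHat ξ n j ω ν μ) (c n j) := fun n j ν μ =>
    hgmeas.comp ((measurable_acovHat hmeas n j ν μ).prodMk measurable_const)
  have gI : ∀ n j ω ν μ, g (acovHat ξ n j ω ν μ) (c n j) ∈ Set.Icc (0 : ℝ) 1 :=
    fun n j ω ν μ => hgrange _ _ (hc n j)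
  have iG : ∀ n j ν μ, Integrable (fun ω => g (acovHat ξ n j ω ν μ) (c n j)) P :=
    fun n j ν μ => Integrable.of_bound (mG n j ν μ).aestronglyMeasurable 1
      (Eventually.of_forall fun ω => by
        rw [Real.norm_eq_abs, abs_of_nonneg (gI n j ω ν μ).1]
        exact (gI n j ω ν μ).2)
  have G0 : ∀ n j ν μ, 0 ≤ ∫ ω, g (acovHat ξ n j ω ν μ) (c n j) ∂P := fun n j ν μ =>
    integral_nonneg fun ω => (gI n j ω ν μ).1
  have G1 : ∀ n j ν μ, ∫ ω, g (acovHat ξ n j ω ν μ) (c n j) ∂P ≤ 1 := fun n j ν μ => by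
    simpa using integral_mono (iG n j ν μ) (integrable_const (1 : ℝ)) fun ω => (gI n j ω ν μ).2
  have hrate := tendsto_sum_integral_abs_sub hmeas hstat hmom hphisum mseq hm1 hm2
  -- Random majorant of the error in the entry `(ν, μ)`, and its expectation.
  set B : (Fin q → ℕ) → Fin p → Fin p → Ω → ℝ := fun n ν μ ω =>
    C * ∑ j ∈ lags q (mseq n), |acovHat ξ n j ω ν μ - acov ξ P j ν μ| +
      ∑ j ∈ lags q (mseq n), |acov ξ P j ν μ| *
        (|w (mseq n) j - 1| + (1 - g (acovHat ξ n j ω ν μ) (c n j))) +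
      ∑' j, if j ∈ lags q (mseq n) then 0 else |acov ξ P j ν μ| with hB
  set E : (Fin q → ℕ) → Fin p → Fin p → ℝ := fun n ν μ =>
    C * ∑ j ∈ lags q (mseq n), ∫ ω, |acovHat ξ n j ω ν μ - acov ξ P j ν μ| ∂P +
      ∑ j ∈ lags q (mseq n), |acov ξ P j ν μ| *
        (|w (mseq n) j - 1| + (1 - ∫ ω, g (acovHat ξ n j ω ν μ) (c n j) ∂P)) +
      ∑' j, if j ∈ lags q (mseq n) then 0 else |acov ξ P j ν μ| with hE
  have hBE : ∀ᶠ n in atTop, ∀ ν μ, Integrable (B n ν μ) P ∧ ∫ ω, B n ν μ ω ∂P = E n ν μ := by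
    have hev := eventually_all.2 fun ν => eventually_all.2 fun μ => (hrate ν μ).1
    filter_upwards [hev] with n hn ν μ
    have iu : ∀ j, Integrable
        (fun ω => |w (mseq n) j - 1| + (1 - g (acovHat ξ n j ω ν μ) (c n j))) P := fun j =>
      (integrable_const _).add ((integrable_const _).sub (iG n j ν μ))
    have i1 : Integrable (fun ω => C * ∑ j ∈ lags q (mseq n),
        |acovHat ξ n j ω ν μ - acov ξ P j ν μ|) P :=
      (integrable_finsetSum _ (hn ν μ)).const_mul C
    have i2 : Integrable (fun ω => ∑ j ∈ lags q (mseq n), |acov ξ P j ν μ| *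
        (|w (mseq n) j - 1| + (1 - g (acovHat ξ n j ω ν μ) (c n j)))) P :=
      integrable_finsetSum _ fun j _ => (iu j).const_mul _
    have i12 := i1.add i2
    refine ⟨i12.add (integrable_const _), ?_⟩
    simp only [hB, hE]
    rw [integral_add (by exact i12) (integrable_const _), integral_add i1 i2, integral_const_mul,
      integral_finsetSum _ (hn ν μ), integral_finsetSum _ fun j _ => (iu j).const_mul _]
    congr 1
    · congr 1
      refine Finset.sum_congr rfl fun j _ => ?_
      have ig : Integrable (fun ω => 1 - g (acovHat ξ n j ω ν μ) (c n j)) P :=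
        (integrable_const _).sub (iG n j ν μ)
      rw [integral_const_mul, integral_add (integrable_const _) ig,
        integral_sub (integrable_const _) (iG n j ν μ)]
      simp
    · simp
  have hE0 : ∀ ν μ, Tendsto (fun n => E n ν μ) atTop (𝓝 0) := by
    intro ν μ
    have t1 := ((hrate ν μ).2).const_mul C
    have t2 := tendsto_window_sum_zero (l := atTop) (fun n => lags q (mseq n))
      (fun j => |acov ξ P j ν μ|) (fun j => abs_nonneg _) (hγ ν μ)
      (fun n j => |w (mseq n) j - 1| + (1 - ∫ ω, g (acovHat ξ n j ω ν μ) (c n j) ∂P))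
      (fun n j => add_nonneg (abs_nonneg _) (sub_nonneg.2 (G1 n j ν μ)))
      (D := C + 1 + 1)
      (fun n j => by
        have := (abs_sub (w (mseq n) j) 1).trans (add_le_add (hC _ _) abs_one.le)
        linarith [G0 n j ν μ])
      (fun j => by
        have a1 := (((hW1 j).comp hm1).sub_const 1).abs
        have a2 := (hg j ν μ).const_sub 1
        simpa using a1.add a2)
    have t3 := tendsto_window_tail_zero (l := atTop) (fun n => lags q (mseq n))
      (fun j => |acov ξ P j ν μ|) (fun j => abs_nonneg _) (hγ ν μ)
      (fun j => by
        filter_upwards [hm1.eventually (eventually_ge_atTop fun i => (j i).natAbs)] with n hn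
        rw [lags, Finset.mem_Icc, Pi.le_def, Pi.le_def]
        refine ⟨fun i => ?_, fun i => ?_⟩ <;>
        · have : (j i).natAbs ≤ mseq n i := hn i
          omega)
    simpa [hE] using (t1.add t2).add t3
  have hlim : Tendsto (fun n => ENNReal.ofReal ((∑ ν, ∑ μ, E n ν μ) / ε)) atTop (𝓝 0) := by
    have h1 : Tendsto (fun n => ∑ ν, ∑ μ, E n ν μ) atTop (𝓝 (∑ _ν : Fin p, ∑ _μ : Fin p, 0)) :=
      tendsto_finsetSum _ fun ν _ => tendsto_finsetSum _ fun μ _ => hE0 ν μ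
    simpa using ENNReal.tendsto_ofReal (h1.div_const ε)
  refine tendsto_of_tendsto_of_tendsto_of_le_of_le' tendsto_const_nhds hlim
    (Eventually.of_forall fun n => zero_le) ?_
  filter_upwards [hBE] with n hn
  have hbound : ∀ ω, ‖(∑ j ∈ lags q (mseq n),
      w (mseq n) j • (fun ν μ : Fin p =>
        acovHat ξ n j ω ν μ * g (acovHat ξ n j ω ν μ) (c n j))) -
          (∑' j : Fin q → ℤ, acov ξ P j)‖ ≤ ∑ ν, ∑ μ, B n ν μ ω := by
    intro ω
    refine (norm_le_sum_abs _).trans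
      (Finset.sum_le_sum fun ν _ => Finset.sum_le_sum fun μ _ => ?_)
    rw [Pi.sub_apply, Pi.sub_apply, htsum]
    simp only [Finset.sum_apply, Pi.smul_apply, smul_eq_mul]
    exact abs_window_sub_tsum_le (lags q (mseq n)) (w (mseq n))
      (fun j => acovHat ξ n j ω ν μ) (fun j => g (acovHat ξ n j ω ν μ) (c n j))
      (fun j => acov ξ P j ν μ) (hC (mseq n)) (fun j => gI n j ω ν μ) (hγ ν μ)
  have iB : ∀ ν ∈ Finset.univ, Integrable (fun ω => ∑ μ, B n ν μ ω) P := fun ν _ =>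
    integrable_finsetSum _ fun μ _ => (hn ν μ).1
  have hmarkov := mul_meas_ge_le_integral_of_nonneg
    (Eventually.of_forall fun ω => (norm_nonneg _).trans (hbound ω))
    (integrable_finsetSum _ iB) ε
  rw [integral_finsetSum _ iB] at hmarkov
  simp_rw [integral_finsetSum _ fun μ _ => (hn _ μ).1, fun ν μ => (hn ν μ).2] at hmarkov
  calc P {ω | ε < ‖(∑ j ∈ lags q (mseq n),
          w (mseq n) j • (fun ν μ : Fin p =>
            acovHat ξ n j ω ν μ * g (acovHat ξ n j ω ν μ) (c n j))) -
              (∑' j : Fin q → ℤ, acov ξ P j)‖}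
      ≤ P {ω | ε ≤ ∑ ν, ∑ μ, B n ν μ ω} :=
        measure_mono fun ω hω => (le_of_lt hω).trans (hbound ω)
    _ = ENNReal.ofReal (P.real {ω | ε ≤ ∑ ν, ∑ μ, B n ν μ ω}) := (ofReal_measureReal).symm
    _ ≤ _ := ENNReal.ofReal_le_ofReal (by
        rw [le_div_iff₀ hε, mul_comm]
        exact hmarkov)

end
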